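/- Let g be a finite-dimensional semisimple Lie algebra over an algebraically closed field K of characteristic 0, let (e,h,f) be an sl2-triple in g, and for i ∈ ℤ let g(h,i) = {z ∈ g : [h,z] = i·z}. For any integer i, let k denote the linear span of {[x,y] : x ∈ g(h,i), y ∈ g(h,-i)}, which is a Lie subalgebra of g(h,0). Then k is reductive and every element of the center of k is ad-semisimple in g; that is, k = [k,k] ⊕ z(k) with [k,k] a semisimple Lie algebra and ad_z : g → g a semisimple endomorphism for every z in the center z(k) of k. -/

import Mathlib

open Module.End

namespace SpanBr

open Polynomial in
theorem nilp_of_trace {K V : Type*} [Field K] [CharZero K] [AddCommGroup V] [Module K V]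
    [FiniteDimensional K V] (x : Module.End K V)
    (hx : ∀ m : ℕ, LinearMap.trace K V (x ^ (m + 1)) = 0) : IsNilpotent x := by
  have htr : ∀ q : K[X], LinearMap.trace K V (aeval x (q * X)) = 0 := by
    intro q
    induction q using Polynomial.induction_on' with
    | add p q hp hq => rw [add_mul, map_add, map_add, hp, hq, add_zero]
    | monomial n a =>
      rw [monomial_mul_X, aeval_monomial, ← Algebra.smul_def, map_smul, hx, smul_zero]
  have h0 : x.charpoly ≠ 0 := (LinearMap.charpoly_monic x).ne_zero
  obtain ⟨r, hr, hrd⟩ := exists_eq_pow_rootMultiplicity_mul_and_not_dvd x.charpoly h0 (0 : K)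
  rw [C_0, sub_zero] at hr hrd
  set a := rootMultiplicity 0 x.charpoly
  have hcop : IsCoprime (X ^ (a + 1)) r :=
    IsCoprime.pow_left ((irreducible_X.coprime_iff_not_dvd).mpr hrd)
  obtain ⟨u, v, huv⟩ := hcop
  have hch : aeval x (X ^ a * r) = 0 := by rw [← hr]; exact LinearMap.aeval_self_charpoly x
  set P := aeval x (u * X ^ (a + 1)) with hP
  have hQ : aeval x (v * r) = 1 - P := by
    have := congrArg (aeval x) huv
    rw [map_add, map_one] at this
    exact eq_sub_of_add_eq' this
  have hidem : IsIdempotentElem P := by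
    have h1 : P * (1 - P) = 0 := by
      rw [← hQ, hP, ← map_mul]
      have : u * X ^ (a + 1) * (v * r) = u * X * v * (X ^ a * r) := by ring
      rw [this, map_mul, hch, mul_zero]
    rw [mul_sub, mul_one, sub_eq_zero] at h1
    exact h1.symm
  have hP0 : P = 0 := by
    apply LinearMap.IsIdempotentElem.eq_zero_of_trace_eq_zero hidem
    have := htr (u * X ^ a)
    rwa [mul_assoc, ← pow_succ] at this
  refine ⟨a, ?_⟩
  have h2 : aeval x (X ^ a * r * v) = x ^ a := by
    rw [mul_assoc, mul_comm r, map_mul, hQ, hP0]; simp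
  rw [← h2, map_mul, hch, zero_mul]

theorem nilp_of_mem_span {K V : Type*} [Field K] [CharZero K] [AddCommGroup V] [Module K V]
    [FiniteDimensional K V] (x : Module.End K V)
    (hx : x ∈ Submodule.span K {z | ∃ a b : Module.End K V, Commute x b ∧ z = a * b - b * a}) :
    IsNilpotent x := by
  apply nilp_of_trace
  intro m
  have key : ∀ y ∈ Submodule.span K
      {z | ∃ a b : Module.End K V, Commute x b ∧ z = a * b - b * a},
      LinearMap.trace K V (y * x ^ m) = 0 := by
    intro y hy
    induction hy using Submodule.span_induction with
    | mem z hz =>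
      obtain ⟨a, b, hb, rfl⟩ := hz
      rw [sub_mul, map_sub, sub_eq_zero, mul_assoc b, LinearMap.trace_mul_comm K b, mul_assoc,
        mul_assoc, ((hb.pow_left m).eq)]
    | zero => simp
    | add _ _ _ _ h1 h2 => rw [add_mul, map_add, h1, h2, add_zero]
    | smul c _ _ h1 => rw [smul_mul_assoc, map_smul, h1, smul_zero]
  rw [pow_succ']
  exact key x hx

section sl2
variable {K V : Type*} [Field K] [CharZero K] [AddCommGroup V] [Module K V]
  (E H F : Module.End K V)

theorem HF (hf : ∀ v, H (F v) = F (H v) - (2 : K) • F v) (k : ℕ) (u : V) :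
    H ((F ^ k) u) = (F ^ k) (H u) - (2 * k : K) • (F ^ k) u := by
  induction k with
  | zero => simp
  | succ k ih =>
    rw [pow_succ', Module.End.mul_apply, Module.End.mul_apply, hf, ih, map_sub, map_smul]
    push_cast
    module

theorem EF (hf : ∀ v, H (F v) = F (H v) - (2 : K) • F v)
    (hef : ∀ v, E (F v) = F (E v) + H v) (k : ℕ) (u : V) :
    E ((F ^ (k+1)) u) = (F ^ (k+1)) (E u) + (k + 1 : K) • (F ^ k) (H u - (k : K) • u) := by
  induction k with
  | zero => simp [hef]
  | succ k ih =>
    rw [pow_succ' F (k+1), Module.End.mul_apply, Module.End.mul_apply, hef, ih, HF H F hf]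
    simp only [map_add, map_smul, map_sub]
    rw [pow_succ' F k]
    simp only [Module.End.mul_apply]
    push_cast
    module

theorem primNat (hf : ∀ v, H (F v) = F (H v) - (2 : K) • F v)
    (hef : ∀ v, E (F v) = F (E v) + H v) (p : ℕ) (v : V) (hv : v ≠ 0) (l : K)
    (hE : E v = 0) (hH : H v = l • v) (hF : (F ^ p) v = 0) : ∃ j : ℕ, j < p ∧ l = j := by
  induction p with
  | zero => exact absurd (by simpa using hF) hv
  | succ p ih =>
    have h1 := EF E H F hf hef p v
    rw [hF, hE, hH, ← sub_smul, map_smul] at h1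
    simp only [map_zero, zero_add] at h1
    rw [smul_smul] at h1
    rcases smul_eq_zero.mp h1.symm with h2 | h2
    · have h3 : (p + 1 : K) ≠ 0 := by exact_mod_cast p.succ_ne_zero
      exact ⟨p, p.lt_succ_self, sub_eq_zero.mp ((mul_eq_zero.mp h2).resolve_left h3)⟩
    · obtain ⟨j, hj, h⟩ := ih h2
      exact ⟨j, by omega, h⟩

theorem base (he : ∀ v, H (E v) = E (H v) + (2 : K) • E v)
    (hf : ∀ v, H (F v) = F (H v) - (2 : K) • F v)
    (hef : ∀ v, E (F v) = F (E v) + H v) (p : ℕ) (l : K) (u : V)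
    (hE : E u = 0) (hF : (F ^ p) u = 0)
    (hH : H (H u - l • u) = l • (H u - l • u)) : H u - l • u = 0 := by
  induction p generalizing u with
  | zero =>
    have : u = 0 := by simpa using hF
    simp [this]
  | succ p ih =>
    have hEH : E (H u) = 0 := by
      have := he u
      rw [hE] at this
      simpa using this.symm
    have h1 := EF E H F hf hef p u
    rw [hF, hE] at h1
    simp only [map_zero, zero_add] at h1
    have h3 : (p + 1 : K) ≠ 0 := by exact_mod_cast p.succ_ne_zero
    have h4 := (smul_eq_zero.mp h1.symm).resolve_left h3
    by_cases hl : l = p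
    · by_contra hne
      rw [← hl] at h4
      obtain ⟨j, hj, h⟩ := primNat E H F hf hef p _ hne l (by simp [hE, hEH]) hH h4
      rw [hl] at h
      have : p = j := by exact_mod_cast h
      omega
    · have h5 := ih (H u - (p : K) • u) (by simp [hE, hEH]) h4 (by
        simp only [map_sub, map_smul] at hH ⊢
        rw [sub_eq_iff_eq_add] at hH
        have h6 := congrArg H hH
        simp only [map_sub, map_smul, map_add] at h6
        rw [h6, hH]
        module)
      simp only [map_sub, map_smul] at h5 hH
      rw [sub_eq_iff_eq_add] at hH
      rw [hH] at h5
      have h7 : (l - p) • (H u - l • u) = 0 := by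
        rw [← h5]; module
      exact (smul_eq_zero.mp h7).resolve_left (sub_ne_zero.mpr hl)

theorem EpowH (he : ∀ v, H (E v) = E (H v) + (2 : K) • E v) (k : ℕ) (u : V) :
    H ((E ^ k) u) = (E ^ k) (H u) + (2 * k : K) • (E ^ k) u := by
  induction k with
  | zero => simp
  | succ k ih =>
    rw [pow_succ', Module.End.mul_apply, Module.End.mul_apply, he, ih, map_add, map_smul]
    push_cast
    module

theorem step (he : ∀ v, H (E v) = E (H v) + (2 : K) • E v)
    (hf : ∀ v, H (F v) = F (H v) - (2 : K) • F v)
    (hef : ∀ v, E (F v) = F (E v) + H v) (p : ℕ) (hF : F ^ p = 0) (k : ℕ) (l : K) (u : V)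
    (hE : (E ^ (k + 1)) u = 0)
    (hH : H (H u - l • u) = l • (H u - l • u)) : H u - l • u = 0 := by
  induction k generalizing u l with
  | zero => exact base E H F he hf hef p l u (by simpa using hE) (by simp [hF]) hH
  | succ k ih =>
    -- the Casimir operator
    let C : Module.End K V := H * H + (2 : K) • H + (4 : K) • (F * E)
    have hC : ∀ v, C v = H (H v) + (2 : K) • H v + (4 : K) • F (E v) := fun v => rfl
    have hCE : ∀ v, E (C v) = C (E v) := by
      intro v
      simp only [hC, map_add, map_smul, hef, he]
      module
    have hCEk : ∀ (j : ℕ) v, (E ^ j) (C v) = C ((E ^ j) v) := by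
      intro j
      induction j with
      | zero => intro v; simp
      | succ j ihj => intro v; rw [pow_succ', Module.End.mul_apply, Module.End.mul_apply, ihj, hCE]
    have hCH : ∀ v, H (C v) = C (H v) := by
      intro v
      simp only [hC, map_add, map_smul, hf, he]
      module
    set v := H u - l • u with hv
    by_contra hne
    have hw := ih (l + 2) (E u) (by rwa [pow_succ, Module.End.mul_apply] at hE) (by
      have h1 : H (E u) - (l + 2) • E u = E v := by
        rw [he, hv, map_sub, map_smul]; module
      rw [h1, he, hH, map_smul]; module)
    have hEv : E v = 0 := by
      rw [← hw, he, hv, map_sub, map_smul]; module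
    obtain ⟨m, -, hm⟩ := primNat E H F hf hef p v hne l hEv hH (by simp [hF])
    let nu : K := l + 2 + 2 * k
    let u1 := C u - (nu * nu + 2 * nu) • u
    have hu1 : (E ^ (k + 1)) u1 = 0 := by
      have h1 : (E ^ (k+1)) u1 = C ((E ^ (k+1)) u) - (nu * nu + 2 * nu) • (E ^ (k+1)) u := by
        simp only [u1, map_sub, map_smul, hCEk]
      have h2 : H ((E ^ (k+1)) u) = nu • (E ^ (k+1)) u := by
        rw [pow_succ, Module.End.mul_apply, EpowH E H he, sub_eq_zero.mp hw, map_smul, ← add_smul]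
      have h3 : E ((E ^ (k+1)) u) = 0 := by
        rw [← Module.End.mul_apply, ← pow_succ', hE]
      rw [h1, hC, h3, h2, map_smul, h2, map_zero]
      module
    have hv1 : H u1 - l • u1 = C v - (nu * nu + 2 * nu) • v := by
      simp only [u1, map_sub, map_smul, hCH, hv]; module
    have hCv : C v = (l * l + 2 * l) • v := by
      rw [hC, hEv, hH, map_smul, hH, map_zero]; module
    have h8 := ih l u1 hu1 (by
      rw [hv1, hCv, ← sub_smul, map_smul, hH, smul_comm])
    rw [hv1, hCv, ← sub_smul] at h8
    have h9 := (smul_eq_zero.mp h8).resolve_right hne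
    have h10 : ((2 + 2 * k) * (2 * m + 4 + 2 * k) : K) = 0 := by
      have : l * l + 2 * l - (nu * nu + 2 * nu) = - ((2 + 2 * k) * (2 * l + 4 + 2 * k)) := by
        simp only [nu]; ring
      rw [this, neg_eq_zero] at h9
      rw [← hm, h9]
    have h11 : (2 + 2 * k) * (2 * m + 4 + 2 * k) = 0 := by exact_mod_cast h10
    simp at h11

theorem eig_top [IsAlgClosed K] [FiniteDimensional K V]
    (he : ∀ v, H (E v) = E (H v) + (2 : K) • E v)
    (hf : ∀ v, H (F v) = F (H v) - (2 : K) • F v)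
    (hef : ∀ v, E (F v) = F (E v) + H v) : ⨆ μ : K, H.eigenspace μ = ⊤ := by
  have hEn : IsNilpotent E := by
    apply nilp_of_mem_span
    have h1 : E = (1/2 : K) • (H * E - E * H) := by
      ext v
      simp [he]
    have hm := Submodule.smul_mem _ (1/2 : K) (Submodule.subset_span (R := K)
      (s := {z | ∃ a b : Module.End K V, Commute E b ∧ z = a * b - b * a})
      ⟨H, E, Commute.refl _, rfl⟩)
    rw [← h1] at hm
    exact hm
  have hFn : IsNilpotent F := by
    apply nilp_of_mem_span
    have h1 : F = (-1/2 : K) • (H * F - F * H) := by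
      ext v
      simp [hf, smul_smul]
    have hm := Submodule.smul_mem _ (-1/2 : K) (Submodule.subset_span (R := K)
      (s := {z | ∃ a b : Module.End K V, Commute F b ∧ z = a * b - b * a})
      ⟨H, F, Commute.refl _, rfl⟩)
    rw [← h1] at hm
    exact hm
  obtain ⟨k, hk⟩ := hEn
  obtain ⟨p, hp⟩ := hFn
  have hstep : ∀ (l : K) (u : V), H (H u - l • u) = l • (H u - l • u) → H u - l • u = 0 :=
    fun l u h => step E H F he hf hef p hp k l u (by rw [pow_succ', hk]; simp) h
  rw [eq_top_iff, ← Module.End.iSup_maxGenEigenspace_eq_top H]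
  refine iSup_mono fun μ => ?_
  intro u hu
  rw [Module.End.mem_maxGenEigenspace] at hu
  obtain ⟨n, hn⟩ := hu
  rw [Module.End.mem_eigenspace_iff, ← sub_eq_zero]
  induction n with
  | zero => 
    have : u = 0 := by simpa using hn
    simp [this]
  | succ n ih =>
    rcases n with _ | n
    · simpa using hn
    · apply ih
      rw [pow_succ', pow_succ', Module.End.mul_apply, Module.End.mul_apply] at hn
      set y := ((H - μ • 1) ^ n) u
      rw [pow_succ', Module.End.mul_apply]
      have := hstep μ y
      simp only [LinearMap.sub_apply, LinearMap.smul_apply, Module.End.one_apply] at hn ⊢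
      exact this (sub_eq_zero.mp hn)

end sl2
theorem jordan {K L : Type*} [Field K] [IsAlgClosed K] [CharZero K] [LieRing L] [LieAlgebra K L]
    [FiniteDimensional K L] [LieAlgebra.IsKilling K L] (x : L) :
    ∃ s n : L, x = s + n ∧ (LieAlgebra.ad K L s).IsSemisimple ∧
      IsNilpotent (LieAlgebra.ad K L n) ∧ ∀ y : L, ⁅x, y⁆ = 0 → ⁅n, y⁆ = 0 := by
  obtain ⟨N, -, S, hS₀, hN, hS, hSN⟩ := (LieAlgebra.ad K L x).exists_isNilpotent_isSemisimple
  replace hS₀ : Commute (LieAlgebra.ad K L x) S := Algebra.commute_of_mem_adjoin_self hS₀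
  have hN0 := hN
  rw [eq_sub_of_add_eq hSN.symm] at hN
  have aux {α : K} {y : L} (hy : y ∈ (LieAlgebra.ad K L x).maxGenEigenspace α) : S y = α • y := by
    rw [maxGenEigenspace_eq] at hy
    rw [apply_eq_of_mem_of_comm_of_isFinitelySemisimple_of_isNil hy hS₀ hS.isFinitelySemisimple hN]
  have h_der (y z : L) (α β : K) (hy : y ∈ (LieAlgebra.ad K L x).maxGenEigenspace α)
      (hz : z ∈ (LieAlgebra.ad K L x).maxGenEigenspace β) :
      S ⁅y, z⁆ = ⁅S y, z⁆ + ⁅y, S z⁆ := by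
    have hyz : ⁅y, z⁆ ∈ (LieAlgebra.ad K L x).maxGenEigenspace (α + β) :=
      LieModule.lie_mem_maxGenEigenspace_toEnd hy hz
    rw [aux hy, aux hz, aux hyz, smul_lie, lie_smul, ← add_smul]
  replace h_der (y z : L) : S ⁅y, z⁆ = ⁅S y, z⁆ + ⁅y, S z⁆ := by
    have hy : y ∈ ⨆ α : K, (LieAlgebra.ad K L x).maxGenEigenspace α := by
      simp [Module.End.iSup_maxGenEigenspace_eq_top]
    have hz : z ∈ ⨆ α : K, (LieAlgebra.ad K L x).maxGenEigenspace α := by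
      simp [Module.End.iSup_maxGenEigenspace_eq_top]
    induction hy using Submodule.iSup_induction' with
    | mem α y hy =>
      induction hz using Submodule.iSup_induction' with
      | mem β z hz => exact h_der y z α β hy hz
      | zero => simp
      | add _ _ _ _ h h' => simp only [lie_add, map_add, h, h']; abel
    | zero => simp
    | add _ _ _ _ h h' => simp only [add_lie, map_add, h, h']; abel
  replace h_der : ∀ y z : L, S ⁅y, z⁆ = ⁅y, S z⁆ - ⁅z, S y⁆ := by
    simp_rw [← lie_skew (S _) _, add_comm, ← sub_eq_add_neg] at h_der; assumption
  let S' : LieDerivation K L L := ⟨S, h_der⟩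
  obtain ⟨y, hy⟩ := LieDerivation.IsKilling.exists_eq_ad S'
  replace hy : S = LieAlgebra.ad K L y := by
    rw [← LieDerivation.coe_ad_apply_eq_ad_apply y, hy]
  have hNy : LieAlgebra.ad K L (x - y) = N := by
    rw [map_sub, hSN, hy, add_sub_cancel_right]
  refine ⟨y, x - y, by abel, hy ▸ hS, hNy ▸ hN0, fun w hw => ?_⟩
  have h0 : S w = 0 := by
    rw [aux (α := 0), zero_smul]
    rw [Module.End.mem_maxGenEigenspace]
    exact ⟨1, by simpa using hw⟩
  rw [hy, LieAlgebra.ad_apply] at h0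
  rw [sub_lie, hw, h0, sub_zero]

theorem trace_zero {K L M : Type*} [Field K] [LieRing L] [LieAlgebra K L]
    [FiniteDimensional K L] [AddCommGroup M] [Module K M] [LieRingModule L M] [LieModule K L M]
    [FiniteDimensional K M] (J : LieIdeal K L)
    (hJ : ∀ x ∈ J, IsNilpotent (LieModule.toEnd K L M x)) (x : L) (hx : x ∈ J) (y : L) :
    LieModule.traceForm K L M x y = 0 := by
  have hn : LieModule.IsNilpotent J M := by
    rw [LieModule.isNilpotent_iff_forall' (R := K)]
    intro z
    exact hJ z z.2
  obtain ⟨n, hn⟩ := (LieModule.isNilpotent_iff K J M).mp hn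
  rw [LieModule.traceForm_apply_apply]
  refine (LinearMap.isNilpotent_trace_of_isNilpotent ?_).eq_zero
  refine ⟨n, ?_⟩
  have key : ∀ m : ℕ, ∀ v : M,
      ((LieModule.toEnd K L M x ∘ₗ LieModule.toEnd K L M y) ^ m) v ∈ J.lcs M m := by
    intro m
    induction m with
    | zero => intro v; simp
    | succ m ih =>
      intro v
      rw [pow_succ', LieIdeal.lcs_succ]
      exact LieSubmodule.lie_mem_lie hx (LieSubmodule.lie_mem _ (ih v))
  ext v
  have h1 := key n v
  rw [← LieSubmodule.mem_toSubmodule, LieIdeal.coe_lcs_eq, hn] at h1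
  simpa using h1

section
variable {K L M : Type*} [Field K] [LieRing L] [LieAlgebra K L]
    [AddCommGroup M] [Module K M] [LieRingModule L M] [LieModule K L M]

theorem toEnd_lie (x y : L) : LieModule.toEnd K L M ⁅x, y⁆ =
    LieModule.toEnd K L M x * LieModule.toEnd K L M y -
      LieModule.toEnd K L M y * LieModule.toEnd K L M x := by
  ext v
  simp

theorem toEnd_commute (x y : L) (h : ⁅x, y⁆ = 0) :
    Commute (LieModule.toEnd K L M x) (LieModule.toEnd K L M y) := by
  have h1 := toEnd_lie (K := K) (M := M) x y
  rw [h, map_zero] at h1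
  exact (sub_eq_zero.mp h1.symm)

theorem toEnd_nilp [CharZero K] [FiniteDimensional K M] (x : L)
    (hx : x ∈ Submodule.span K {z : L | ∃ a b : L, ⁅x, b⁆ = 0 ∧ z = ⁅a, b⁆}) :
    IsNilpotent (LieModule.toEnd K L M x) := by
  apply nilp_of_mem_span
  have h1 := Submodule.mem_map_of_mem (f := (LieModule.toEnd K L M : L →ₗ[K] Module.End K M)) hx
  rw [Submodule.map_span] at h1
  refine Submodule.span_mono ?_ h1
  rintro _ ⟨_, ⟨a, b, hb, rfl⟩, rfl⟩
  exact ⟨LieModule.toEnd K L M a, LieModule.toEnd K L M b, toEnd_commute x b hb, toEnd_lie a b⟩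

theorem trace_zero_of_commute [FiniteDimensional K M] (x y : L) (h : ⁅x, y⁆ = 0)
    (hx : IsNilpotent (LieModule.toEnd K L M x)) : LieModule.traceForm K L M x y = 0 := by
  rw [LieModule.traceForm_apply_apply]
  exact (LinearMap.isNilpotent_trace_of_isNilpotent
    ((toEnd_commute x y h).isNilpotent_mul_right hx)).eq_zero

end

theorem reductive_of_traceForm {K L M : Type*} [Field K] [IsAlgClosed K] [CharZero K]
    [LieRing L] [LieAlgebra K L]
    [FiniteDimensional K L] [AddCommGroup M] [Module K M] [LieRingModule L M] [LieModule K L M]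
    [FiniteDimensional K M] (hB : LinearMap.ker (LieModule.traceForm K L M) = ⊥) :
    IsCompl (LieAlgebra.derivedSeries K L 1).toSubmodule
        (LieAlgebra.center K L).toSubmodule ∧
      LieAlgebra.IsSemisimple K (LieAlgebra.derivedSeries K L 1) := by
  have hD : (LieAlgebra.derivedSeries K L 1).toSubmodule =
      Submodule.span K {z : L | ∃ x y : L, ⁅x, y⁆ = z} := by
    rw [LieAlgebra.derivedSeries_def, LieAlgebra.derivedSeriesOfIdeal_succ,
      LieAlgebra.derivedSeriesOfIdeal_zero, LieSubmodule.lieIdeal_oper_eq_linear_span']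
    simp
  have hbr : ∀ x y : L, ⁅x, y⁆ ∈ LieAlgebra.derivedSeries K L 1 := by
    intro x y
    rw [← LieSubmodule.mem_toSubmodule, hD]
    exact Submodule.subset_span ⟨x, y, rfl⟩
  have hnd : ∀ x : L, (∀ y, LieModule.traceForm K L M x y = 0) → x = 0 := by
    intro x hx
    have : x ∈ LinearMap.ker (LieModule.traceForm K L M) := by
      rw [LinearMap.mem_ker]; ext y; exact hx y
    rw [hB] at this
    simpa using this
  have hcen : ∀ z : L, z ∈ LieAlgebra.center K L ↔ ∀ x : L, ⁅x, z⁆ = 0 := by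
    intro z
    exact LieModule.mem_maxTrivSubmodule K L L z
  have horth : (LieAlgebra.center K L).toSubmodule =
      LinearMap.BilinForm.orthogonal (LieModule.traceForm K L M)
        (LieAlgebra.derivedSeries K L 1).toSubmodule := by
    ext z
    rw [LinearMap.BilinForm.mem_orthogonal_iff, LieSubmodule.mem_toSubmodule, hcen]
    constructor
    · intro hz n hn
      rw [hD] at hn
      change LieModule.traceForm K L M n z = 0
      induction hn using Submodule.span_induction with
      | mem n hn =>
        obtain ⟨x, y, rfl⟩ := hn
        rw [LieModule.traceForm_apply_lie_apply, hz, map_zero]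
      | zero => simp
      | add a b _ _ ha hb => rw [map_add, LinearMap.add_apply, ha, hb, add_zero]
      | smul c a _ ha => rw [map_smul, LinearMap.smul_apply, ha, smul_zero]
    · intro hz x
      apply hnd
      intro y
      rw [LieModule.traceForm_comm, ← LieModule.traceForm_apply_lie_apply]
      exact hz _ (hbr y x)
  have hdis : ∀ z : L, z ∈ LieAlgebra.derivedSeries K L 1 → z ∈ LieAlgebra.center K L → z = 0 := by
    intro z h1 h2
    have hz : ∀ y : L, ⁅z, y⁆ = 0 := fun y => by rw [← lie_skew, (hcen z).mp h2, neg_zero]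
    apply hnd
    intro y
    refine trace_zero_of_commute z y (hz y) (toEnd_nilp z ?_)
    rw [← LieSubmodule.mem_toSubmodule, hD] at h1
    refine Submodule.span_mono ?_ h1
    rintro _ ⟨a, b, rfl⟩
    exact ⟨a, b, hz b, rfl⟩
  have hc : IsCompl (LieAlgebra.derivedSeries K L 1).toSubmodule
        (LieAlgebra.center K L).toSubmodule := by
    rw [horth, LinearMap.BilinForm.isCompl_orthogonal_iff_disjoint
      (LieModule.traceForm_isSymm K L M).isRefl, ← horth, Submodule.disjoint_def]
    exact fun z h1 h2 => hdis z h1 h2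
  refine ⟨hc, ?_⟩
  have htr : LieAlgebra.HasTrivialRadical K (LieAlgebra.derivedSeries K L 1) := by
    rw [LieAlgebra.hasTrivialRadical_iff_no_abelian_ideals]
    intro I hI
    have hab : ∀ a ∈ I, ∀ b ∈ I, ⁅(a : L), (b : L)⁆ = 0 := by
      intro a ha b hb
      have h1 : ⁅(⟨a, ha⟩ : I), (⟨b, hb⟩ : I)⁆ = 0 := hI.trivial _ _
      have h2 := congrArg (fun w : I => ((w : LieAlgebra.derivedSeries K L 1) : L)) h1
      exact h2
    let I' : LieIdeal K L :=
      { I.toSubmodule.map (LieAlgebra.derivedSeries K L 1).toSubmodule.subtype with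
        lie_mem := by
          rintro x _ ⟨d, hd, rfl⟩
          have hx : x ∈ (LieAlgebra.derivedSeries K L 1).toSubmodule ⊔
            (LieAlgebra.center K L).toSubmodule := by rw [hc.sup_eq_top]; trivial
          obtain ⟨d', hd', z, hz, rfl⟩ := Submodule.mem_sup.mp hx
          refine ⟨⁅(⟨d', hd'⟩ : LieAlgebra.derivedSeries K L 1), d⁆, I.lie_mem hd, ?_⟩
          have hz' : ⁅z, (d : L)⁆ = 0 := by
            rw [← lie_skew, (hcen z).mp hz, neg_zero]
          change ⁅d', (d : L)⁆ = ⁅d' + z, (d : L)⁆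
          rw [add_lie, hz', add_zero] }
    have hmem : ∀ a : L, a ∈ I' ↔ ∃ d ∈ I, (d : L) = a := fun a => Iff.rfl
    have hab' : ∀ a ∈ I', ∀ b ∈ I', ⁅a, b⁆ = 0 := by
      rintro _ ⟨a, ha, rfl⟩ _ ⟨b, hb, rfl⟩
      exact hab a ha b hb
    have hJle : ⁅(⊤ : LieIdeal K L), I'⁆ ≤ I' := LieSubmodule.lie_le_right _ _
    have hJ0 : ∀ x ∈ ⁅(⊤ : LieIdeal K L), I'⁆, IsNilpotent (LieModule.toEnd K L M x) := by
      intro x hx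
      apply toEnd_nilp
      have hxI := hJle hx
      rw [← LieSubmodule.mem_toSubmodule, LieSubmodule.lieIdeal_oper_eq_linear_span'] at hx
      refine Submodule.span_mono ?_ hx
      rintro _ ⟨a, -, b, hb, rfl⟩
      exact ⟨a, b, hab' x hxI b hb, rfl⟩
    have hI'c : ∀ a ∈ I', a = 0 := by
      intro a ha
      apply hdis
      · obtain ⟨d, hd, rfl⟩ := ha
        exact d.2
      · rw [hcen]
        intro x
        exact hnd _ (trace_zero _ hJ0 _ (LieSubmodule.lie_mem_lie (LieSubmodule.mem_top x) ha))
    rw [LieSubmodule.eq_bot_iff]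
    intro d hd
    have := hI'c d ⟨d, hd, rfl⟩
    exact Subtype.ext this
  infer_instance

end SpanBr

/-- For an `sl2`-triple `(e, h, f)` in a finite-dimensional semisimple Lie algebra over an
algebraically closed field of characteristic zero and any integer `i`, any Lie subalgebra
`k` of `g` whose underlying subspace is the linear span of `[g(h,i), g(h,-i)]` is
reductive, and every element of its center is ad-semisimple in `g`:
`k = [k,k] ⊕ z(k)`, the derived subalgebra `[k,k]` is semisimple, and `ad z : g → g` is a
semisimple endomorphism for every `z ∈ z(k)`. -/
theorem span_bracket_eigenspaces_reductive
    {K : Type*} [Field K] [IsAlgClosed K] [CharZero K]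
    {g : Type*} [LieRing g] [LieAlgebra K g] [FiniteDimensional K g]
    [LieAlgebra.IsSemisimple K g]
    (e h f : g) (he : ⁅h, e⁆ = (2 : K) • e) (hf : ⁅h, f⁆ = (-2 : K) • f) (hef : ⁅e, f⁆ = h)
    (i : ℤ) (k : LieSubalgebra K g)
    (hk : k.toSubmodule = Submodule.span K {z : g |
        ∃ x ∈ eigenspace (LieAlgebra.ad K g h) (i : K),
        ∃ y ∈ eigenspace (LieAlgebra.ad K g h) ((-i : ℤ) : K), z = ⁅x, y⁆}) :
    IsCompl (LieAlgebra.derivedSeries K k 1).toSubmodule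
        (LieAlgebra.center K k).toSubmodule ∧
      LieAlgebra.IsSemisimple K (LieAlgebra.derivedSeries K k 1) ∧
      ∀ z : k, z ∈ LieAlgebra.center K k →
        Module.End.IsSemisimple (LieAlgebra.ad K g (z : g)) := by
  have hG : ∀ (c : K) (x : g), x ∈ eigenspace (LieAlgebra.ad K g h) c ↔ ⁅h, x⁆ = c • x := by
    intro c x
    rw [Module.End.mem_eigenspace_iff, LieAlgebra.ad_apply]
  have htop : ⨆ μ : K, eigenspace (LieAlgebra.ad K g h) μ = ⊤ := by
    apply SpanBr.eig_top (LieAlgebra.ad K g e) (LieAlgebra.ad K g h) (LieAlgebra.ad K g f)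
    · intro v
      simp only [LieAlgebra.ad_apply]
      rw [leibniz_lie, he, smul_lie, add_comm]
    · intro v
      simp only [LieAlgebra.ad_apply]
      rw [leibniz_lie, hf, smul_lie, neg_smul]
      abel
    · intro v
      simp only [LieAlgebra.ad_apply]
      rw [leibniz_lie, hef, add_comm]
  have hGadd : ∀ (a b c : K) (x y : g), a + b = c → ⁅h, x⁆ = a • x → ⁅h, y⁆ = b • y →
      ⁅h, ⁅x, y⁆⁆ = c • ⁅x, y⁆ := by
    intro a b c x y hc hx hy
    rw [leibniz_lie, hx, hy, smul_lie, lie_smul, ← add_smul, hc]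
  have hinv : ∀ x y z : g, killingForm K g ⁅x, y⁆ z = killingForm K g x ⁅y, z⁆ :=
    fun x y z => LieModule.traceForm_apply_lie_apply K g g x y z
  have hsymm : ∀ x y : g, killingForm K g x y = killingForm K g y x :=
    fun x y => LieModule.traceForm_comm K g g x y
  have hperp : ∀ (a b : K) (x y : g), a + b ≠ 0 → ⁅h, x⁆ = a • x → ⁅h, y⁆ = b • y →
      killingForm K g x y = 0 := by
    intro a b x y hab hx hy
    have h1 := hinv x h y
    rw [← lie_skew, hx, hy] at h1
    simp only [map_neg, map_smul, LinearMap.neg_apply, LinearMap.smul_apply, smul_eq_mul] at h1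
    have h2 : (a + b) * killingForm K g x y = 0 := by linear_combination -h1
    exact (mul_eq_zero.mp h2).resolve_left hab
  have hnon : ∀ (a : K) (x : g), ⁅h, x⁆ = a • x →
      (∀ y : g, ⁅h, y⁆ = (-a) • y → killingForm K g x y = 0) → x = 0 := by
    intro a x hx hxy
    have hm : x ∈ LinearMap.ker (killingForm K g) := by
      rw [LinearMap.mem_ker]
      ext y
      have hy : y ∈ ⨆ μ : K, eigenspace (LieAlgebra.ad K g h) μ := by rw [htop]; trivial
      rw [LinearMap.zero_apply]
      induction hy using Submodule.iSup_induction' with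
      | mem b y hy =>
        rw [hG] at hy
        by_cases hab : a + b = 0
        · exact hxy y (by rw [hy, eq_neg_of_add_eq_zero_right hab])
        · exact hperp a b x y hab hx hy
      | zero => simp
      | add _ _ _ _ h1 h2 => rw [map_add, h1, h2, add_zero]
    rw [LieAlgebra.IsKilling.ker_killingForm_eq_bot] at hm
    simpa using hm
  set a : K := (i : K) with ha
  have hkm : ∀ z : g, z ∈ k ↔ z ∈ Submodule.span K {z : g |
      ∃ x y : g, ⁅h, x⁆ = a • x ∧ ⁅h, y⁆ = (-a) • y ∧ z = ⁅x, y⁆} := by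
    intro z
    rw [← LieSubalgebra.mem_toSubmodule, hk]
    have : {z : g | ∃ x ∈ eigenspace (LieAlgebra.ad K g h) (i : K),
        ∃ y ∈ eigenspace (LieAlgebra.ad K g h) ((-i : ℤ) : K), z = ⁅x, y⁆} = {z : g |
      ∃ x y : g, ⁅h, x⁆ = a • x ∧ ⁅h, y⁆ = (-a) • y ∧ z = ⁅x, y⁆} := by
      ext w
      simp only [Set.mem_setOf_eq, hG, Int.cast_neg]
      constructor
      · rintro ⟨x, hx, y, hy, rfl⟩
        exact ⟨x, y, hx, hy, rfl⟩
      · rintro ⟨x, y, hx, hy, rfl⟩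
        exact ⟨x, hx, y, hy, rfl⟩
    rw [this]
  have hbrk : ∀ x y : g, ⁅h, x⁆ = a • x → ⁅h, y⁆ = (-a) • y → ⁅x, y⁆ ∈ k := by
    intro x y hx hy
    rw [hkm]
    exact Submodule.subset_span ⟨x, y, hx, hy, rfl⟩
  have hk0 : ∀ z ∈ k, ⁅h, z⁆ = 0 := by
    intro z hz
    rw [hkm] at hz
    induction hz using Submodule.span_induction with
    | mem z hz =>
      obtain ⟨x, y, hx, hy, rfl⟩ := hz
      rw [hGadd a (-a) 0 x y (by ring) hx hy, zero_smul]
    | zero => simp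
    | add u v _ _ hu hv => rw [lie_add, hu, hv, add_zero]
    | smul c u _ hu => rw [lie_smul, hu, smul_zero]
  have hlk : ∀ w : g, ⁅h, w⁆ = 0 → ∀ z ∈ k, ⁅w, z⁆ ∈ k := by
    intro w hw z hz
    have hw' : ⁅h, w⁆ = (0 : K) • w := by rw [hw, zero_smul]
    rw [hkm] at hz
    induction hz using Submodule.span_induction with
    | mem z hz =>
      obtain ⟨x, y, hx, hy, rfl⟩ := hz
      rw [leibniz_lie]
      exact k.add_mem (hbrk _ _ (hGadd 0 a a w x (by ring) hw' hx) hy)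
        (hbrk _ _ hx (hGadd 0 (-a) (-a) w y (by ring) hw' hy))
    | zero => rw [lie_zero]; exact k.zero_mem
    | add u v _ _ hu hv => rw [lie_add]; exact k.add_mem hu hv
    | smul c u _ hu => rw [lie_smul]; exact k.smul_mem _ hu
  let g0 : LieSubalgebra K g :=
    { eigenspace (LieAlgebra.ad K g h) (0 : K) with
      lie_mem' := by
        intro x y hx hy
        exact (hG 0 _).mpr (hGadd 0 0 0 x y (by ring) ((hG 0 x).mp hx) ((hG 0 y).mp hy)) }
  have hg0 : ∀ x : g, x ∈ g0 ↔ ⁅h, x⁆ = 0 := by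
    intro x
    have := hG 0 x
    rw [zero_smul] at this
    exact this
  let J : LieIdeal K g0 :=
    { carrier := {z : g0 | (z : g) ∈ k ∧ (∀ x : g, ⁅h, x⁆ = a • x → ⁅(z : g), x⁆ = 0) ∧
        (∀ x : g, ⁅h, x⁆ = (-a) • x → ⁅(z : g), x⁆ = 0)}
      zero_mem' := ⟨k.zero_mem, fun x _ => zero_lie x, fun x _ => zero_lie x⟩
      add_mem' := by
        rintro u v ⟨h1, h2, h3⟩ ⟨h4, h5, h6⟩
        refine ⟨k.add_mem h1 h4, fun x hx => ?_, fun x hx => ?_⟩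
        · change ⁅(u : g) + (v : g), x⁆ = 0
          rw [add_lie, h2 x hx, h5 x hx, add_zero]
        · change ⁅(u : g) + (v : g), x⁆ = 0
          rw [add_lie, h3 x hx, h6 x hx, add_zero]
      smul_mem' := by
        rintro c u ⟨h1, h2, h3⟩
        refine ⟨k.smul_mem c h1, fun x hx => ?_, fun x hx => ?_⟩
        · change ⁅c • (u : g), x⁆ = 0
          rw [smul_lie, h2 x hx, smul_zero]
        · change ⁅c • (u : g), x⁆ = 0
          rw [smul_lie, h3 x hx, smul_zero]
      lie_mem := by
        rintro w z ⟨h1, h2, h3⟩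
        have hw := (hg0 _).mp w.2
        have hw' : ⁅h, (w : g)⁆ = (0 : K) • (w : g) := by rw [hw, zero_smul]
        refine ⟨hlk w hw z h1, fun x hx => ?_, fun x hx => ?_⟩
        · change ⁅⁅(w : g), (z : g)⁆, x⁆ = 0
          rw [lie_lie, h2 x hx, lie_zero, h2 _ (hGadd 0 a a _ x (by ring) hw' hx), sub_zero]
        · change ⁅⁅(w : g), (z : g)⁆, x⁆ = 0
          rw [lie_lie, h3 x hx, lie_zero, h3 _ (hGadd 0 (-a) (-a) _ x (by ring) hw' hx),
            sub_zero] }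
  have hJn : ∀ z ∈ J, IsNilpotent (LieModule.toEnd K g0 g z) := by
    rintro z ⟨h1, h2, h3⟩
    change IsNilpotent (LieModule.toEnd K g g (z : g))
    apply SpanBr.toEnd_nilp
    rw [hkm] at h1
    refine Submodule.span_mono ?_ h1
    rintro _ ⟨x, y, hx, hy, rfl⟩
    exact ⟨x, y, h3 y hy, rfl⟩
  have hJ0 : ∀ z : g, z ∈ k → (∀ x : g, ⁅h, x⁆ = a • x → ⁅(z : g), x⁆ = 0) →
      (∀ x : g, ⁅h, x⁆ = (-a) • x → ⁅(z : g), x⁆ = 0) → z = 0 := by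
    intro z h1 h2 h3
    have hz0 := hk0 z h1
    refine hnon 0 z (by rw [hz0, zero_smul]) fun y hy => ?_
    rw [neg_zero, zero_smul] at hy
    exact SpanBr.trace_zero (K := K) (M := g) J hJn ⟨z, (hg0 z).mpr hz0⟩ ⟨h1, h2, h3⟩
      ⟨y, (hg0 y).mpr hy⟩
  have hkB : ∀ z : g, z ∈ k → (∀ u ∈ k, killingForm K g z u = 0) → z = 0 := by
    intro z hz hzu
    have hz0 := hk0 z hz
    have hz' : ⁅h, z⁆ = (0 : K) • z := by rw [hz0, zero_smul]
    refine hJ0 z hz (fun x hx => ?_) (fun x hx => ?_)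
    · refine hnon a _ (hGadd 0 a a z x (by ring) hz' hx) fun y hy => ?_
      rw [hinv]
      exact hzu _ (hbrk x y hx hy)
    · refine hnon (-a) _ (hGadd 0 (-a) (-a) z x (by ring) hz' hx) fun y hy => ?_
      rw [neg_neg] at hy
      rw [hinv, ← lie_skew, map_neg, hzu _ (hbrk y x hy hx), neg_zero]
  have hker : LinearMap.ker (LieModule.traceForm K k g) = ⊥ := by
    rw [LinearMap.ker_eq_bot']
    intro z hz
    refine Subtype.ext (hkB z z.2 fun u hu => ?_)
    have := LinearMap.congr_fun hz ⟨u, hu⟩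
    exact this
  obtain ⟨hr1, hr2⟩ := SpanBr.reductive_of_traceForm hker
  refine ⟨hr1, hr2, ?_⟩
  intro z hz
  have hzc : ∀ u ∈ k, ⁅u, (z : g)⁆ = 0 := by
    intro u hu
    have h1 := (LieModule.mem_maxTrivSubmodule K k k z).mp hz ⟨u, hu⟩
    exact congrArg Subtype.val h1
  have hzw : ∀ w : g, ⁅h, w⁆ = 0 → ⁅(z : g), w⁆ = 0 := by
    intro w hw
    have hwz : ⁅w, (z : g)⁆ = 0 := by
      refine hkB _ (hlk w hw z z.2) fun u hu => ?_
      rw [hinv, ← lie_skew, hzc u hu, neg_zero, map_zero]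
    rw [← lie_skew, hwz, neg_zero]
  obtain ⟨s, n, hsn, hs, hn, hcomm⟩ := SpanBr.jordan (K := K) (z : g)
  have hn0 : n = 0 := by
    have hhn : ⁅h, n⁆ = 0 := by
      rw [← lie_skew, hcomm h (hzw h (lie_self h)), neg_zero]
    refine hnon 0 n (by rw [hhn, zero_smul]) fun w hw => ?_
    rw [neg_zero, zero_smul] at hw
    exact SpanBr.trace_zero_of_commute (K := K) (M := g) n w (hcomm w (hzw w hw)) hn
  rw [hsn, hn0, add_zero]
  exact hs
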